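/- Let n ≥ 4, N = (n-1)(n+2)/2, k₁ = ⌊(n+2)/4⌋, and let λ_1 ≤ λ_2 ≤ ... ≤ λ_N be the eigenvalues of a symmetric operator R̊ on the trace-free symmetric 2-tensors of an n-dimensional Euclidean vector space such that ∑_{α=1}^{k₁} λ_α ≥ 0 (k₁-nonnegativity). Then for any algebraic Weyl tensor W, ∑_α λ_α |S^α W|² ≥ 0, where {S^α} is an orthonormal eigenbasis of R̊. -/

import Mathlib

open Finset

/-- The derivation action of a symmetric 2-tensor `S` on a 4-tensor `W`. -/
def tensorAct (n : ℕ) (S : Fin n → Fin n → ℝ)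
    (W : Fin n → Fin n → Fin n → Fin n → ℝ) (i j k l : Fin n) : ℝ :=
  ∑ m, (S i m * W m j k l + S j m * W i m k l + S k m * W i j m l + S l m * W i j k m)

/-!
Let `R` have the curvature symmetries and let `S` be symmetric and traceless. Then `SR = X + Xᵗ`,
where `X` is the action of `S` on the first pair of indices and `ᵗ` exchanges the two pairs. For
fixed `k`, `l` the matrix `X(·, ·, k, l)` is the anticommutator `SA + AS` with the skew matrix
`A = R(·, ·, k, l)`, and diagonalizing `S` shows `n|SA + AS|² ≤ 2(n - 2)|S|²|A|²`. Hence
`n|SR|² ≤ 8(n - 2)|R|²` when `|S| ≤ 1`.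

Summing over an orthonormal basis, the identity `∑ S_α K S_α = (Kᵀ + tr K) / 2 - K / n` and the
Bianchi identity give `n ∑ |S_α R|² = 2(n² + n - 8)|R|² + 4n|Ric|²`. For `3 ≤ n` this is at least
`k = ⌊(n + 2) / 4⌋` times the upper bound for a single term. Write the weighted sum as
`∑ (λ_α - μ)|S_α R|² + μ ∑ |S_α R|²` with `μ = λ_k`, which is nonnegative. The first sum is smallest
when the coefficients of the `k` smallest weights are maximal and the others vanish, and together
with the lower bound for the second one this leaves a nonnegative multiple of `λ_1 + ⋯ + λ_k`.
-/

section WeightedSums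

variable {ι 𝕜 : Type*} [Fintype ι] [CommRing 𝕜] [LinearOrder 𝕜] [IsStrictOrderedRing 𝕜]

theorem sum_mul_nonneg_of_sum_lowerSet_nonneg [LinearOrder ι] {lam a : ι → 𝕜} {C : 𝕜}
    (hlam : Monotone lam) (ha : ∀ i, 0 ≤ a i) (haC : ∀ i, a i ≤ C) {s : Finset ι}
    (hs : IsLowerSet (s : Set ι)) (hne : s.Nonempty) (hsum : 0 ≤ ∑ i ∈ s, lam i)
    (hC : #s * C ≤ ∑ i, a i) : 0 ≤ ∑ i, lam i * a i := by
  set μ := lam (s.max' hne)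
  have hlow : ∀ i ∈ s, lam i ≤ μ := fun i hi => hlam (s.le_max' i hi)
  have hhigh : ∀ i ∉ s, μ ≤ lam i := fun i hi =>
    hlam (le_of_not_ge fun h => hi (hs h (s.max'_mem hne)))
  have hμ : 0 ≤ μ := by
    have h := hsum.trans (sum_le_card_nsmul s lam μ hlow)
    rw [nsmul_eq_mul] at h
    exact nonneg_of_mul_nonneg_right h (Nat.cast_pos.2 hne.card_pos)
  have hC0 : 0 ≤ C := (ha (s.max' hne)).trans (haC _)
  -- Lowering `a` to `0` off `s` and raising it to `C` on `s` decreases `∑ (lam - μ) * a`.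
  have hmove : ∑ i ∈ s, (lam i - μ) * C ≤ ∑ i, (lam i - μ) * a i := by
    rw [← sum_add_sum_compl s fun i => (lam i - μ) * a i]
    refine le_add_of_le_of_nonneg (sum_le_sum fun i hi => ?_) (sum_nonneg fun i hi => ?_)
    · exact mul_le_mul_of_nonpos_left (haC i) (sub_nonpos.2 (hlow i hi))
    · exact mul_nonneg (sub_nonneg.2 (hhigh i (mem_compl.1 hi))) (ha i)
  have hle : (∑ i ∈ s, lam i) * C + μ * (∑ i, a i - #s * C) ≤ ∑ i, lam i * a i := by
    simp only [sub_mul, sum_sub_distrib, sum_const, nsmul_eq_mul, ← sum_mul, ← mul_sum] at hmove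
    linarith
  exact (add_nonneg (mul_nonneg hsum hC0) (mul_nonneg hμ (sub_nonneg.2 hC))).trans hle

theorem card_mul_sq_add_le_of_sum_eq_zero {f : ι → 𝕜} (hf : ∑ i, f i = 0)
    {i j : ι} (hij : i ≠ j) :
    Fintype.card ι * (f i + f j) ^ 2 ≤ 2 * (Fintype.card ι - 2) * ∑ k, f k ^ 2 := by
  classical
  set t : Finset ι := {i, j}ᶜ
  have hsplit (g : ι → 𝕜) : ∑ k, g k = g i + g j + ∑ k ∈ t, g k := by
    rw [← sum_add_sum_compl {i, j} g, sum_pair hij]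
  have hcard : (#t : 𝕜) = Fintype.card ι - 2 := by
    simpa [nsmul_eq_mul, add_comm, ← sub_eq_iff_eq_add', one_add_one_eq_two, eq_comm]
      using hsplit 1
  have hcauchy : (f i + f j) ^ 2 ≤ (Fintype.card ι - 2) * ∑ k ∈ t, f k ^ 2 := by
    rw [← hcard, ← neg_sq, ← eq_neg_of_add_eq_zero_right ((hsplit f).symm.trans hf)]
    exact sq_sum_le_card_mul_sum_sq
  have hpair : (Fintype.card ι - 2) * (f i + f j) ^ 2
      ≤ (Fintype.card ι - 2) * (2 * (f i ^ 2 + f j ^ 2)) :=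
    mul_le_mul_of_nonneg_left add_sq_le (hcard ▸ Nat.cast_nonneg _)
  rw [hsplit]
  linarith

end WeightedSums

open Matrix

section Anticommutator

variable {ι : Type*} [Fintype ι]

theorem sum_sq_eq_trace_mul_transpose {κ R : Type*} [Fintype κ] [CommSemiring R]
    (A : Matrix ι κ R) : ∑ i, ∑ j, A i j ^ 2 = (A * Aᵀ).trace := by
  simp [trace, mul_apply, sq]

theorem card_mul_sum_sq_diagonal_anticommutator_le [DecidableEq ι] {s : ι → ℝ} (hs : ∑ i, s i = 0)
    {B : Matrix ι ι ℝ} (hB : ∀ i, B i i = 0) :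
    Fintype.card ι * ∑ i, ∑ j, (diagonal s * B + B * diagonal s) i j ^ 2
      ≤ 2 * (Fintype.card ι - 2) * (∑ i, s i ^ 2) * ∑ i, ∑ j, B i j ^ 2 := by
  simp only [mul_sum _ _ (Fintype.card ι : ℝ), mul_sum _ _ (2 * (Fintype.card ι - 2) * _ : ℝ)]
  refine sum_le_sum fun i _ => sum_le_sum fun j _ => ?_
  rw [Matrix.add_apply, diagonal_mul, mul_diagonal]
  obtain rfl | hij := eq_or_ne i j
  · simp [hB]
  · calc Fintype.card ι * (s i * B i j + B i j * s j) ^ 2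
        = Fintype.card ι * (s i + s j) ^ 2 * B i j ^ 2 := by ring
      _ ≤ _ := mul_le_mul_of_nonneg_right (card_mul_sq_add_le_of_sum_eq_zero hs hij) (sq_nonneg _)

theorem sum_sq_conjStarAlgAut [DecidableEq ι] (U : unitaryGroup ι ℝ) (A : Matrix ι ι ℝ) :
    ∑ i, ∑ j, Unitary.conjStarAlgAut ℝ _ U A i j ^ 2 = ∑ i, ∑ j, A i j ^ 2 := by
  simp only [sum_sq_eq_trace_mul_transpose, ← conjTranspose_eq_transpose_of_trivial,
    ← star_eq_conjTranspose, ← map_star, ← map_mul]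
  rw [Unitary.conjStarAlgAut_apply, trace_mul_cycle, Unitary.coe_star_mul_self, one_mul]

theorem card_mul_sum_sq_anticommutator_le {S A : Matrix ι ι ℝ} (hS : S.IsSymm)
    (hS0 : S.trace = 0) (hA : Aᵀ = -A) :
    Fintype.card ι * ∑ i, ∑ j, (S * A + A * S) i j ^ 2
      ≤ 2 * (Fintype.card ι - 2) * (∑ i, ∑ j, S i j ^ 2) * ∑ i, ∑ j, A i j ^ 2 := by
  classical
  have hH : S.IsHermitian := (conjTranspose_eq_transpose_of_trivial S).trans hS
  set φ := Unitary.conjStarAlgAut ℝ (Matrix ι ι ℝ) hH.eigenvectorUnitary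
  set s := hH.eigenvalues
  obtain ⟨B, rfl⟩ := EquivLike.surjective φ A
  have hSφ : S = φ (diagonal s) := hH.spectral_theorem
  have hs : ∑ i, s i = 0 := by simpa [hS0] using hH.trace_eq_sum_eigenvalues.symm
  have hB (i : ι) : B i i = 0 := by
    have h : star B = -B := EquivLike.injective φ <| by
      rw [map_star, map_neg, ← hA, star_eq_conjTranspose, conjTranspose_eq_transpose_of_trivial]
    simpa [self_eq_neg, neg_eq_self] using congrFun₂ h i i
  have hdiag : ∑ i, ∑ j, diagonal s i j ^ 2 = ∑ i, s i ^ 2 := by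
    simp [diagonal_apply, ite_pow]
  rw [hSφ, ← map_mul, ← map_mul, ← map_add, sum_sq_conjStarAlgAut, sum_sq_conjStarAlgAut,
    sum_sq_conjStarAlgAut, hdiag]
  exact card_mul_sum_sq_diagonal_anticommutator_le hs hB

end Anticommutator

section Frame

/-- The family `S` is a Parseval frame of the space of trace-free symmetric 2-tensors with its
Frobenius inner product; orthonormal bases are the Parseval frames that consist of unit vectors. -/
structure IsTracelessSymmFrame {ι κ : Type*} [Fintype ι] [Fintype κ] (S : κ → ι → ι → ℝ) :
    Prop where
  symm : ∀ α i j, S α i j = S α j i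
  trace_eq_zero : ∀ α, ∑ i, S α i i = 0
  reconstruct : ∀ T : ι → ι → ℝ, (∀ i j, T i j = T j i) → ∑ i, T i i = 0 →
    ∀ i j, T i j = ∑ α, (∑ k, ∑ l, T k l * S α k l) * S α i j

namespace IsTracelessSymmFrame

variable {ι κ : Type*} [Fintype ι] [Fintype κ] {S : κ → ι → ι → ℝ}

theorem sum_sq_eq_sum_inner_sq (hS : IsTracelessSymmFrame S) {T : ι → ι → ℝ}
    (hT : ∀ i j, T i j = T j i) (hT0 : ∑ i, T i i = 0) :
    ∑ i, ∑ j, T i j ^ 2 = ∑ α, (∑ i, ∑ j, T i j * S α i j) ^ 2 := by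
  calc ∑ i, ∑ j, T i j ^ 2
      = ∑ i, ∑ j, ∑ α, (∑ k, ∑ l, T k l * S α k l) * (T i j * S α i j) := by
        refine sum_congr rfl fun i _ => sum_congr rfl fun j _ => ?_
        rw [sq]
        nth_rw 2 [hS.reconstruct T hT hT0 i j]
        rw [mul_sum]
        exact sum_congr rfl fun α _ => by ring
    _ = ∑ α, ∑ i, ∑ j, (∑ k, ∑ l, T k l * S α k l) * (T i j * S α i j) := sum_comm_cycle
    _ = ∑ α, (∑ i, ∑ j, T i j * S α i j) ^ 2 := by simp only [← mul_sum, sq]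

theorem sum_sq_le_one (hS : IsTracelessSymmFrame S) (α : κ) : ∑ i, ∑ j, S α i j ^ 2 ≤ 1 := by
  have hparseval := hS.sum_sq_eq_sum_inner_sq (hS.symm α) (hS.trace_eq_zero α)
  have hle : (∑ i, ∑ j, S α i j ^ 2) ^ 2 ≤ ∑ i, ∑ j, S α i j ^ 2 := by
    conv_rhs => rw [hparseval]
    simpa only [← sq] using single_le_sum (f := fun β => (∑ i, ∑ j, S α i j * S β i j) ^ 2)
      (fun β _ => sq_nonneg _) (mem_univ α)
  nlinarith

theorem sum_inner_mul [DecidableEq ι] (hS : IsTracelessSymmFrame S) (M : Matrix ι ι ℝ) (i j : ι) :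
    ∑ α, (∑ k, ∑ l, M k l * S α k l) * S α i j
      = ((1 / 2 : ℝ) • (M + Mᵀ) - (M.trace / Fintype.card ι) • 1) i j := by
  set T : Matrix ι ι ℝ := (1 / 2 : ℝ) • (M + Mᵀ) - (M.trace / Fintype.card ι) • 1 with hT
  have hsymm (k l : ι) : T k l = T l k := by
    simp [hT, one_apply, eq_comm, add_comm]
  have htrace : T.trace = 0 := by
    cases isEmpty_or_nonempty ι
    · simp [trace]
    · simp only [hT, trace_sub, trace_smul, trace_add, trace_transpose, trace_one, smul_eq_mul]
      field_simp
      ring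
  have hinner (α : κ) : ∑ k, ∑ l, T k l * S α k l = ∑ k, ∑ l, M k l * S α k l := by
    have hswap : ∑ k, ∑ l, M l k * S α k l = ∑ k, ∑ l, M k l * S α k l := by
      rw [sum_comm]
      simp only [hS.symm α]
    have htr : ∑ k, ∑ l, (1 : Matrix ι ι ℝ) k l * S α k l = 0 := by
      simp [one_apply, hS.trace_eq_zero]
    simp only [hT, Matrix.sub_apply, Matrix.smul_apply, Matrix.add_apply, transpose_apply,
      smul_eq_mul, sub_mul, add_mul, mul_assoc, sum_sub_distrib, sum_add_distrib, ← mul_sum,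
      hswap, htr]
    ring
  rw [hS.reconstruct T hsymm htrace i j]
  simp only [hinner]

theorem sum_mul_mul [DecidableEq ι] (hS : IsTracelessSymmFrame S) (K : Matrix ι ι ℝ) :
    ∑ α, of (S α) * K * of (S α)
      = (1 / 2 : ℝ) • (Kᵀ + K.trace • 1) - (1 / Fintype.card ι : ℝ) • K := by
  ext i j
  let M (l : ι) : Matrix ι ι ℝ := vecMulVec (Pi.single i 1) fun m => K m l
  have hM (l : ι) (α : κ) : (of (S α) * K) i l = ∑ a, ∑ b, M l a b * S α a b := by
    simp [M, vecMulVec_apply, mul_apply, Pi.single_apply, mul_comm]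
  calc (∑ α, of (S α) * K * of (S α)) i j
      = ∑ α, ∑ l, (∑ a, ∑ b, M l a b * S α a b) * S α l j := by
        simp only [Matrix.sum_apply, mul_apply (M := of (S _) * K), hM, of_apply]
    _ = ∑ l, ((1 / 2 : ℝ) • (M l + (M l)ᵀ) - ((M l).trace / Fintype.card ι) • 1) l j := by
        rw [sum_comm]
        simp only [hS.sum_inner_mul]
    _ = _ := by
        simp [M, vecMulVec_apply, Pi.single_apply, one_apply, ← mul_sum, sum_add_distrib, trace,
          div_eq_inv_mul, eq_comm]

theorem sum_mulVec_mul_mulVec [DecidableEq ι] (hS : IsTracelessSymmFrame S)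
    (F G : ι → ℝ) (i j : ι) :
    ∑ α, (of (S α) *ᵥ F) i * (of (S α) *ᵥ G) j
      = (F j * G i + (F ⬝ᵥ G) * (1 : Matrix ι ι ℝ) i j) / 2 - F i * G j / Fintype.card ι := by
  have hvec (α : κ) : G ᵥ* of (S α) = of (S α) *ᵥ G := by
    rw [← mulVec_transpose]
    congr 1
    ext i j
    exact hS.symm α j i
  have h := congrFun₂ (hS.sum_mul_mul (vecMulVec F G)) i j
  simp only [mul_vecMulVec, vecMulVec_mul, hvec, Matrix.sum_apply, vecMulVec_apply,
    transpose_vecMulVec, trace_vecMulVec, Matrix.sub_apply, Matrix.add_apply, Matrix.smul_apply,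
    smul_eq_mul] at h
  rw [h]
  ring

theorem sum_sum_sq_anticommutator (hS : IsTracelessSymmFrame S) {A : Matrix ι ι ℝ} (hA : Aᵀ = -A) :
    Fintype.card ι * ∑ α, ∑ i, ∑ j, (of (S α) * A + A * of (S α)) i j ^ 2
      = (Fintype.card ι ^ 2 - 4) * ∑ i, ∑ j, A i j ^ 2 := by
  classical
  cases isEmpty_or_nonempty ι
  · simp
  have hexpand (α : κ) : ∑ i, ∑ j, (of (S α) * A + A * of (S α)) i j ^ 2
      = -2 * (of (S α) * A * of (S α) * A).trace
        - 2 * (of (S α) * 1 * of (S α) * (A * A)).trace := by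
    set P := of (S α)
    have hP : Pᵀ = P := by ext i j; exact hS.symm α j i
    have hAPAP : (A * P * A * P).trace = (P * A * P * A).trace := by
      simpa only [mul_assoc] using trace_mul_comm A (P * A * P)
    have hPAAP : (P * A * A * P).trace = (P * P * A * A).trace := by
      simpa only [mul_assoc] using trace_mul_comm (P * A * A) P
    have hAPPA : (A * P * P * A).trace = (P * P * A * A).trace := by
      simpa only [mul_assoc] using trace_mul_comm A (P * P * A)
    rw [sum_sq_eq_trace_mul_transpose, transpose_add, transpose_mul, transpose_mul, hA, hP]
    simp only [mul_one, mul_neg, neg_mul, add_mul, mul_add, trace_add, trace_neg, ← mul_assoc]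
    linarith
  have htr : A.trace = 0 := by
    have h := trace_transpose A
    rw [hA, trace_neg] at h
    linarith
  have hsq : (A * A).trace = -∑ i, ∑ j, A i j ^ 2 := by
    simp [sum_sq_eq_trace_mul_transpose, hA]
  simp only [hexpand, sum_sub_distrib, ← mul_sum, ← trace_sum, ← Matrix.sum_mul, hS.sum_mul_mul,
    hA, htr]
  simp only [sub_mul, add_mul, Matrix.smul_mul, neg_mul, one_mul, transpose_one, trace_sub,
    trace_add, trace_smul, trace_neg, trace_one, smul_eq_mul, hsq, zero_smul, add_zero]
  field_simp
  ring

end IsTracelessSymmFrame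

end Frame

section Curvature

theorem sum_comm_pairs {ι₁ ι₂ ι₃ ι₄ M : Type*} [Fintype ι₁] [Fintype ι₂] [Fintype ι₃] [Fintype ι₄]
    [AddCommMonoid M] (f : ι₁ → ι₂ → ι₃ → ι₄ → M) :
    ∑ i, ∑ j, ∑ k, ∑ l, f i j k l = ∑ k, ∑ l, ∑ i, ∑ j, f i j k l :=
  sum_comm_cycle.trans (sum_congr rfl fun _ _ => sum_comm_cycle)

/-- `R` has the symmetries of the curvature tensor of a Riemannian metric. -/
structure IsAlgebraicCurvature {ι : Type*} (R : ι → ι → ι → ι → ℝ) : Prop where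
  skew : ∀ i j k l, R i j k l = -R j i k l
  pair_symm : ∀ i j k l, R i j k l = R k l i j
  bianchi : ∀ i j k l, R i j k l + R j k i l + R k i j l = 0

theorem IsAlgebraicCurvature.skew_right {ι : Type*} {R : ι → ι → ι → ι → ℝ}
    (hR : IsAlgebraicCurvature R) (i j k l : ι) :
    R i j k l = -R i j l k := by
  rw [hR.pair_symm, hR.skew, hR.pair_symm l k i j]

variable {ι κ : Type*} [Fintype ι] [Fintype κ] {R : ι → ι → ι → ι → ℝ}

/-- The Ricci contraction of a 4-tensor, over its first and third indices. -/
def ricci (R : ι → ι → ι → ι → ℝ) (i j : ι) : ℝ :=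
  ∑ m, R m i m j

/-- The action of a 2-tensor on the first index of a 4-tensor. -/
def indexAct (S : ι → ι → ℝ) (R : ι → ι → ι → ι → ℝ) (i j k l : ι) : ℝ :=
  ∑ m, S i m * R m j k l

/-- The derivation action of a 2-tensor on the first two indices of a 4-tensor. -/
def pairAct (S : ι → ι → ℝ) (R : ι → ι → ι → ι → ℝ) (i j k l : ι) : ℝ :=
  ∑ m, (S i m * R m j k l + S j m * R i m k l)

theorem IsAlgebraicCurvature.two_mul_sum_mul_swap (hR : IsAlgebraicCurvature R) :
    2 * ∑ i, ∑ j, ∑ k, ∑ l, R i j k l * R k j i l = ∑ i, ∑ j, ∑ k, ∑ l, R i j k l ^ 2 := by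
  have hsq (i j k l : ι) : R i j k l ^ 2 = R i j k l * R k j i l + R j i k l * R k i j l := by
    have h := hR.bianchi i j k l
    rw [hR.skew j k i l] at h
    rw [hR.skew j i k l]
    linear_combination R i j k l * h
  simp only [hsq, sum_add_distrib]
  rw [sum_comm (f := fun i j => ∑ k, ∑ l, R j i k l * R k i j l), two_mul]

theorem ricci_comm (hR : ∀ i j k l, R i j k l = R k l i j) (i j : ι) : ricci R i j = ricci R j i :=
  sum_congr rfl fun _ _ => hR _ _ _ _

theorem pairAct_eq_anticommutator {S : ι → ι → ℝ} (hS : ∀ i j, S i j = S j i) (i j k l : ι) :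
    pairAct S R i j k l = (of S * of (R · · k l) + of (R · · k l) * of S) i j := by
  simp only [pairAct, Matrix.add_apply, mul_apply, of_apply, sum_add_distrib, hS j, mul_comm]

theorem pairAct_eq_indexAct_sub (hR : ∀ i j k l, R i j k l = -R j i k l) (S : ι → ι → ℝ)
    (i j k l : ι) : pairAct S R i j k l = indexAct S R i j k l - indexAct S R j i k l := by
  simp only [pairAct, indexAct, hR i, mul_neg, ← sub_eq_add_neg, sum_sub_distrib]

theorem card_mul_sum_sq_pairAct_le {S : ι → ι → ℝ} (hS : ∀ i j, S i j = S j i)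
    (hS0 : ∑ i, S i i = 0) (hR : ∀ i j k l, R i j k l = -R j i k l) :
    Fintype.card ι * ∑ i, ∑ j, ∑ k, ∑ l, pairAct S R i j k l ^ 2
      ≤ 2 * (Fintype.card ι - 2) * (∑ i, ∑ j, S i j ^ 2)
        * ∑ i, ∑ j, ∑ k, ∑ l, R i j k l ^ 2 := by
  rw [sum_comm_pairs, sum_comm_pairs fun i j k l => R i j k l ^ 2]
  rw [mul_sum, mul_sum]
  refine sum_le_sum fun k _ => ?_
  rw [mul_sum, mul_sum]
  refine sum_le_sum fun l _ => ?_
  simp only [pairAct_eq_anticommutator hS]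
  exact card_mul_sum_sq_anticommutator_le (by ext i j; exact hS j i) hS0
    (by ext i j; exact hR j i k l)

theorem IsTracelessSymmFrame.sum_sum_sq_pairAct {S : κ → ι → ι → ℝ} (hS : IsTracelessSymmFrame S)
    (hR : ∀ i j k l, R i j k l = -R j i k l) :
    Fintype.card ι * ∑ α, ∑ i, ∑ j, ∑ k, ∑ l, pairAct (S α) R i j k l ^ 2
      = (Fintype.card ι ^ 2 - 4) * ∑ i, ∑ j, ∑ k, ∑ l, R i j k l ^ 2 := by
  simp only [sum_comm_pairs fun i j k l => pairAct _ R i j k l ^ 2]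
  rw [← sum_comm_cycle, sum_comm_pairs fun i j k l => R i j k l ^ 2, mul_sum, mul_sum]
  refine sum_congr rfl fun k _ => ?_
  rw [mul_sum, mul_sum]
  refine sum_congr rfl fun l _ => ?_
  simp only [pairAct_eq_anticommutator (hS.symm _)]
  exact hS.sum_sum_sq_anticommutator (by ext i j; exact hR j i k l)

theorem sum_pairAct_mul_swap (hR : IsAlgebraicCurvature R) (S : ι → ι → ℝ) :
    ∑ i, ∑ j, ∑ k, ∑ l, pairAct S R i j k l * pairAct S R k l i j
      = 4 * ∑ i, ∑ j, ∑ k, ∑ l, indexAct S R i j k l * indexAct S R k l i j := by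
  set T := indexAct S R with hT
  have hskew (i j k l : ι) : T i j l k = -T i j k l := by
    simp only [hT, indexAct, hR.skew_right _ _ l k, mul_neg, sum_neg_distrib]
  have hprod (i j k l : ι) : pairAct S R i j k l * pairAct S R k l i j
      = T i j k l * T k l i j + T i j l k * T l k i j
        + (T j i k l * T k l j i + T j i l k * T l k j i) := by
    rw [pairAct_eq_indexAct_sub hR.skew, pairAct_eq_indexAct_sub hR.skew, hskew i j k l,
      hskew j i k l, hskew k l i j, hskew l k i j]
    ring
  have hsnd (i j : ι) : ∑ k, ∑ l, T i j l k * T l k i j = ∑ k, ∑ l, T i j k l * T k l i j :=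
    sum_comm
  have hfst : ∑ i, ∑ j, ∑ k, ∑ l, T j i k l * T k l j i
      = ∑ i, ∑ j, ∑ k, ∑ l, T i j k l * T k l i j := sum_comm
  simp only [hprod, sum_add_distrib, hsnd, hfst]
  ring

theorem IsTracelessSymmFrame.sum_sum_indexAct_mul_swap {S : κ → ι → ι → ℝ}
    (hS : IsTracelessSymmFrame S) (hR : IsAlgebraicCurvature R) :
    Fintype.card ι * ∑ α, ∑ i, ∑ j, ∑ k, ∑ l, indexAct (S α) R i j k l * indexAct (S α) R k l i j
      = (Fintype.card ι / 4 - 1) * ∑ i, ∑ j, ∑ k, ∑ l, R i j k l ^ 2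
        + Fintype.card ι / 2 * ∑ i, ∑ j, ricci R i j ^ 2 := by
  classical
  cases isEmpty_or_nonempty ι
  · simp
  have hframe (i j k l : ι) : ∑ α, indexAct (S α) R i j k l * indexAct (S α) R k l i j
      = (R k j k l * R i l i j + (∑ m, R m j k l * R m l i j) * (1 : Matrix ι ι ℝ) i k) / 2
        - R i j k l ^ 2 / Fintype.card ι := by
    simpa only [hR.pair_symm k l i j, ← sq] using!
      hS.sum_mulVec_mul_mulVec (R · j k l) (R · l i j) i k
  have hricci : ∑ i, ∑ j, ∑ k, ∑ l, R k j k l * R i l i j = ∑ j, ∑ l, ricci R j l ^ 2 := by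
    rw [sum_comm]
    refine sum_congr rfl fun j _ => sum_comm_cycle.trans <| sum_congr rfl fun l _ => ?_
    rw [sq]
    nth_rw 2 [ricci_comm hR.pair_symm]
    rw [ricci, ricci, sum_mul_sum, sum_comm]
  have hdiag : ∑ i, ∑ j, ∑ k, ∑ l, (∑ m, R m j k l * R m l i j) * (1 : Matrix ι ι ℝ) i k
      = ∑ i, ∑ j, ∑ k, ∑ l, R i j k l * R k j i l := by
    refine sum_congr rfl fun i _ => sum_congr rfl fun j _ => ?_
    rw [sum_comm]
    simp only [one_apply, mul_ite, mul_one, mul_zero, sum_ite_eq, mem_univ, if_true,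
      hR.pair_symm _ _ i j]
    rw [sum_comm]
    simp only [mul_comm]
  have hbianchi := hR.two_mul_sum_mul_swap
  have hsum : ∑ α, ∑ i, ∑ j, ∑ k, ∑ l, indexAct (S α) R i j k l * indexAct (S α) R k l i j
      = ∑ i, ∑ j, ∑ k, ∑ l, ∑ α, indexAct (S α) R i j k l * indexAct (S α) R k l i j :=
    sum_comm_cycle.symm.trans <| sum_congr rfl fun _ _ => sum_congr rfl fun _ _ =>
      sum_comm_cycle.symm
  rw [hsum]
  simp only [hframe, sum_sub_distrib, sum_add_distrib, ← sum_div, hricci, hdiag, ← hbianchi]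
  field_simp
  ring

end Curvature

section DerivationAction

variable {n N : ℕ} {R : Fin n → Fin n → Fin n → Fin n → ℝ}

theorem tensorAct_eq_pairAct_add (hR : ∀ i j k l, R i j k l = R k l i j)
    (S : Fin n → Fin n → ℝ) (i j k l : Fin n) :
    tensorAct n S R i j k l = pairAct S R i j k l + pairAct S R k l i j := by
  simp only [tensorAct, pairAct, hR i j, ← sum_add_distrib, add_assoc]

theorem card_mul_sum_sq_tensorAct_le {S : Fin n → Fin n → ℝ} (hS : ∀ i j, S i j = S j i)
    (hS0 : ∑ i, S i i = 0) (hskew : ∀ i j k l, R i j k l = -R j i k l)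
    (hpair : ∀ i j k l, R i j k l = R k l i j) :
    n * ∑ i, ∑ j, ∑ k, ∑ l, tensorAct n S R i j k l ^ 2
      ≤ 8 * (n - 2) * (∑ i, ∑ j, S i j ^ 2) * ∑ i, ∑ j, ∑ k, ∑ l, R i j k l ^ 2 := by
  set X := pairAct S R
  have hle : ∑ i, ∑ j, ∑ k, ∑ l, tensorAct n S R i j k l ^ 2
      ≤ 4 * ∑ i, ∑ j, ∑ k, ∑ l, X i j k l ^ 2 := by
    calc ∑ i, ∑ j, ∑ k, ∑ l, tensorAct n S R i j k l ^ 2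
        ≤ ∑ i, ∑ j, ∑ k, ∑ l, 2 * (X i j k l ^ 2 + X k l i j ^ 2) := by
          gcongr with i _ j _ k _ l
          rw [tensorAct_eq_pairAct_add hpair]
          exact add_sq_le
      _ = 4 * ∑ i, ∑ j, ∑ k, ∑ l, X i j k l ^ 2 := by
          simp only [← mul_sum, sum_add_distrib]
          rw [sum_comm_pairs fun i j k l => X k l i j ^ 2]
          ring
  have h := card_mul_sum_sq_pairAct_le hS hS0 hskew
  rw [Fintype.card_fin] at h
  linarith [mul_le_mul_of_nonneg_left hle n.cast_nonneg]

theorem sum_sq_tensorAct (hR : ∀ i j k l, R i j k l = R k l i j) (S : Fin n → Fin n → ℝ) :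
    ∑ i, ∑ j, ∑ k, ∑ l, tensorAct n S R i j k l ^ 2
      = 2 * ∑ i, ∑ j, ∑ k, ∑ l, pairAct S R i j k l ^ 2
        + 2 * ∑ i, ∑ j, ∑ k, ∑ l, pairAct S R i j k l * pairAct S R k l i j := by
  simp only [tensorAct_eq_pairAct_add hR, add_sq, sum_add_distrib, mul_assoc, ← mul_sum]
  rw [sum_comm_pairs fun i j k l => pairAct S R k l i j ^ 2]
  ring

theorem IsTracelessSymmFrame.sum_sum_sq_tensorAct {κ : Type*} [Fintype κ]
    {S : κ → Fin n → Fin n → ℝ} (hS : IsTracelessSymmFrame S) (hR : IsAlgebraicCurvature R) :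
    n * ∑ α, ∑ i, ∑ j, ∑ k, ∑ l, tensorAct n (S α) R i j k l ^ 2
      = 2 * (n ^ 2 + n - 8) * ∑ i, ∑ j, ∑ k, ∑ l, R i j k l ^ 2
        + 4 * n * ∑ i, ∑ j, ricci R i j ^ 2 := by
  have hsq := hS.sum_sum_sq_pairAct hR.skew
  have hcross := hS.sum_sum_indexAct_mul_swap hR
  rw [Fintype.card_fin] at hsq hcross
  simp only [sum_sq_tensorAct hR.pair_symm, sum_pairAct_mul_swap hR, sum_add_distrib, ← mul_sum]
  linear_combination 2 * hsq + 8 * hcross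

theorem IsTracelessSymmFrame.mul_sum_sq_tensorAct_le {κ : Type*} [Fintype κ]
    {S : κ → Fin n → Fin n → ℝ} (hS : IsTracelessSymmFrame S) (hR : IsAlgebraicCurvature R)
    (hn : 2 ≤ n) (α : κ) :
    n * ∑ i, ∑ j, ∑ k, ∑ l, tensorAct n (S α) R i j k l ^ 2
      ≤ 8 * (n - 2) * ∑ i, ∑ j, ∑ k, ∑ l, R i j k l ^ 2 := by
  have hn' : (0 : ℝ) ≤ 8 * (n - 2) :=
    mul_nonneg (by norm_num) (sub_nonneg.2 (by exact_mod_cast hn))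
  have hw : 0 ≤ ∑ i, ∑ j, ∑ k, ∑ l, R i j k l ^ 2 := by positivity
  refine (card_mul_sum_sq_tensorAct_le (hS.symm α) (hS.trace_eq_zero α) hR.skew
    hR.pair_symm).trans (mul_le_mul_of_nonneg_right ?_ hw)
  exact mul_le_of_le_one_right hn' (hS.sum_sq_le_one α)

theorem IsTracelessSymmFrame.sum_sq_tensorAct_eq_zero {κ : Type*} [Fintype κ]
    {S : κ → Fin n → Fin n → ℝ} (hS : IsTracelessSymmFrame S) (hR : IsAlgebraicCurvature R)
    (hn : n ≤ 2) (α : κ) :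
    ∑ i, ∑ j, ∑ k, ∑ l, tensorAct n (S α) R i j k l ^ 2 = 0 := by
  obtain rfl | hn0 := n.eq_zero_or_pos
  · simp
  have hle := card_mul_sum_sq_tensorAct_le (hS.symm α) (hS.trace_eq_zero α) hR.skew hR.pair_symm
  have hn' : 8 * ((n : ℝ) - 2) ≤ 0 :=
    mul_nonpos_of_nonneg_of_nonpos (by norm_num) (sub_nonpos.2 (by exact_mod_cast hn))
  rw [mul_assoc] at hle
  refine le_antisymm ?_ (by positivity)
  refine nonpos_of_mul_nonpos_right (hle.trans ?_) (Nat.cast_pos.2 hn0 : (0 : ℝ) < n)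
  exact mul_nonpos_of_nonpos_of_nonneg hn' (by positivity)

theorem natCast_div_four_mul_le (hn : 3 ≤ n) :
    ((n + 2) / 4 : ℕ) * (8 * (n - 2) : ℝ) ≤ 2 * (n ^ 2 + n - 8) := by
  obtain rfl | hn4 := hn.eq_or_lt
  · norm_num
  · have hdiv : 4 * (((n + 2) / 4 : ℕ) : ℝ) ≤ n + 2 := by
      exact_mod_cast Nat.mul_div_le (n + 2) 4
    have hn' : (4 : ℝ) ≤ n := by exact_mod_cast hn4
    nlinarith

theorem IsTracelessSymmFrame.div_four_mul_le_sum_sum_sq_tensorAct {κ : Type*} [Fintype κ]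
    {S : κ → Fin n → Fin n → ℝ} (hS : IsTracelessSymmFrame S) (hR : IsAlgebraicCurvature R)
    (hn : 3 ≤ n) :
    ((n + 2) / 4 : ℕ) * (8 * (n - 2) * ∑ i, ∑ j, ∑ k, ∑ l, R i j k l ^ 2)
      ≤ n * ∑ α, ∑ i, ∑ j, ∑ k, ∑ l, tensorAct n (S α) R i j k l ^ 2 := by
  have hw : 0 ≤ ∑ i, ∑ j, ∑ k, ∑ l, R i j k l ^ 2 := by positivity
  have hric : 0 ≤ 4 * n * ∑ i, ∑ j, ricci R i j ^ 2 := by positivity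
  rw [hS.sum_sum_sq_tensorAct hR, ← mul_assoc]
  exact le_add_of_le_of_nonneg (mul_le_mul_of_nonneg_right (natCast_div_four_mul_le hn) hw) hric

theorem isLowerSet_filter_val_lt (k : ℕ) :
    IsLowerSet (({α | (α : ℕ) < k} : Finset (Fin N)) : Set (Fin N)) := by
  intro α β hβα
  simpa using (Fin.le_def.1 hβα).trans_lt

theorem weighted_act_weyl_sq_nonneg_general {lam : Fin N → ℝ} (hlam : Monotone lam)
    (hknn : 0 ≤ ∑ α ∈ {α : Fin N | (α : ℕ) < (n + 2) / 4}, lam α)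
    {S : Fin N → Fin n → Fin n → ℝ} (hS : IsTracelessSymmFrame S) (hR : IsAlgebraicCurvature R) :
    0 ≤ ∑ α, lam α * ∑ i, ∑ j, ∑ k, ∑ l, tensorAct n (S α) R i j k l ^ 2 := by
  obtain hn | hn := le_or_gt n 2
  · simp only [hS.sum_sq_tensorAct_eq_zero hR hn, mul_zero, sum_const_zero, le_refl]
  obtain rfl | hN := N.eq_zero_or_pos
  · simp
  have hne : ({α : Fin N | (α : ℕ) < (n + 2) / 4} : Finset (Fin N)).Nonempty :=
    ⟨⟨0, hN⟩, by simp only [mem_filter_univ]; lia⟩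
  have hcard : (#{α : Fin N | (α : ℕ) < (n + 2) / 4} : ℝ) ≤ ((n + 2) / 4 : ℕ) := by
    rw [Fin.card_filter_val_lt]
    exact_mod_cast min_le_right _ _
  have hn0 : (0 : ℝ) < n := by exact_mod_cast (Nat.zero_lt_two.trans hn)
  have hC : 0 ≤ 8 * (n - 2) * ∑ i, ∑ j, ∑ k, ∑ l, R i j k l ^ 2 :=
    (mul_nonneg hn0.le (by positivity)).trans (hS.mul_sum_sq_tensorAct_le hR hn.le ⟨0, hN⟩)
  refine sum_mul_nonneg_of_sum_lowerSet_nonneg hlam (fun α => by positivity)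
    (fun α => (le_div_iff₀' hn0).2 (hS.mul_sum_sq_tensorAct_le hR hn.le α))
    (isLowerSet_filter_val_lt _) hne hknn ?_
  rw [← mul_div_assoc, div_le_iff₀' hn0]
  exact (mul_le_mul_of_nonneg_right hcard hC).trans (hS.div_four_mul_le_sum_sum_sq_tensorAct hR hn)

end DerivationAction

theorem weighted_act_weyl_sq_nonneg
    (n N : ℕ) (hn : 4 ≤ n) (hN : 2 * N = (n - 1) * (n + 2))
    (k₁ : ℕ) (hk₁ : k₁ = (n + 2) / 4)
    (lam : Fin N → ℝ) (hmono : ∀ α β : Fin N, α ≤ β → lam α ≤ lam β)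
    (hknn : 0 ≤ ∑ α ∈ Finset.univ.filter (fun α : Fin N => (α : ℕ) < k₁), lam α)
    (S : Fin N → Fin n → Fin n → ℝ)
    (hSsymm : ∀ α i j, S α i j = S α j i)
    (hStrace : ∀ α, ∑ i, S α i i = 0)
    (hSortho : ∀ α β, (∑ i, ∑ j, S α i j * S β i j) = if α = β then 1 else 0)
    (hScomplete : ∀ T : Fin n → Fin n → ℝ, (∀ i j, T i j = T j i) → (∑ i, T i i = 0) →
      ∀ i j, T i j = ∑ α, (∑ k, ∑ l, T k l * S α k l) * S α i j)
    (W : Fin n → Fin n → Fin n → Fin n → ℝ)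
    (hWa : ∀ i j k l, W i j k l = - W j i k l)
    (hWb : ∀ i j k l, W i j k l = - W i j l k)
    (hWc : ∀ i j k l, W i j k l = W k l i j)
    (hWbianchi : ∀ i j k l, W i j k l + W j k i l + W k i j l = 0)
    (hWtrace : ∀ k l, ∑ i, W i k i l = 0) :
    0 ≤ ∑ α, lam α * (∑ i, ∑ j, ∑ k, ∑ l, (tensorAct n (S α) W i j k l) ^ 2) := by
  subst hk₁
  exact weighted_act_weyl_sq_nonneg_general hmono hknn ⟨hSsymm, hStrace, hScomplete⟩
    ⟨hWa, hWc, hWbianchi⟩
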